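/- For every l ≥ 1: A_{l-1} ∩ K_l = {0}, and the quotient map A_l → A_l/A_{l-1} is isometric on K_l; equivalently, ‖x + a‖ ≥ ‖x‖ for every x ∈ K_l and every a ∈ A_{l-1}. -/

import Mathlib

/-!
The operators `e p i j` form, for each fixed `p`, a system of matrix units (`matrixUnits`), so for
each `N` they give a `*`-homomorphism `unitHom` from the `N × N` matrices to `B(H)`, which is
contractive for the operator norm, and the ranges of these exhaust a dense subalgebra of `K_p`.

The lower bound comes from vectors on which `A_q` vanishes asymptotically. With
`stem 0 k = k` and `stem (q + 1) k = stem q (n k 0)`, the operator `e q i j` acts on the basis vectors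
`ξ (stem q k)` as a matrix unit, and every `a ∈ A_q` satisfies `a (ξ (stem q k)) → 0` as `k → ∞`
(`Aset_vanishes`): compact operators do since orthonormal sequences are weakly null, `K_q` does since
each `e q i j` kills all but one of these vectors, and passing from `q` to `q + 1` only passes to a
subfamily. For a fixed `m`, the vectors `ξ (stem q (n j m))`, `j ≥ 0`, are also acted on by
`e (q + 1) i j` as by a matrix unit, so a matrix `c` is recovered isometrically by compressing
`x = unitHom c ∈ K_{q+1}` to their span. Letting `m → ∞` removes `a ∈ A_q`, and
`‖x‖ ≤ ‖c‖ ≤ ‖x + a‖` follows.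
-/


open Filter

open Pointwise

/-- The closed `*`-subalgebra of `B(H)` generated by `{e_{ij}^p : i, j}`. -/
noncomputable def Kset {H : Type*} [NormedAddCommGroup H] [InnerProductSpace ℂ H]
    [CompleteSpace H] (e : ℕ → ℕ → ℕ → (H →L[ℂ] H)) (p : ℕ) : Set (H →L[ℂ] H) :=
  closure ((NonUnitalStarAlgebra.adjoin ℂ {T : H →L[ℂ] H | ∃ i j, T = e p i j} :
    NonUnitalStarSubalgebra ℂ (H →L[ℂ] H)) : Set (H →L[ℂ] H))

/-- `A_0 = K(H)` and `A_p = A_{p-1} + K_p`. -/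
noncomputable def Aset {H : Type*} [NormedAddCommGroup H] [InnerProductSpace ℂ H]
    [CompleteSpace H] (e : ℕ → ℕ → ℕ → (H →L[ℂ] H)) : ℕ → Set (H →L[ℂ] H)
  | 0 => {T : H →L[ℂ] H | IsCompactOperator ⇑T}
  | (l + 1) => Aset e l + Kset e (l + 1)

open scoped Matrix.Norms.L2Operator Topology

section helpers

set_option linter.unusedSectionVars false

variable {H : Type*} [NormedAddCommGroup H] [InnerProductSpace ℂ H] [CompleteSpace H]

/-! ### Matrix units and the algebras they generate -/

/-- A family of operators is a system of matrix units. The adjoint relation is expressed through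
the inner product, a form that passes to strong limits. -/
structure IsMatrixUnits (E : ℕ → ℕ → (H →L[ℂ] H)) : Prop where
  mul_apply : ∀ i j k l v, E i j (E k l v) = if j = k then E i l v else 0
  inner_apply : ∀ i j v w, inner ℂ (E i j v) w = inner ℂ v (E j i w)

theorem IsMatrixUnits.mul {E : ℕ → ℕ → (H →L[ℂ] H)} (hE : IsMatrixUnits E) (i j k l : ℕ) :
    E i j * E k l = if j = k then E i l else 0 := by
  ext v
  rw [mul_apply_eq_comp, hE.mul_apply]
  split_ifs <;> rfl

theorem IsMatrixUnits.star {E : ℕ → ℕ → (H →L[ℂ] H)} (hE : IsMatrixUnits E) (i j : ℕ) :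
    star (E i j) = E j i := by
  rw [ContinuousLinearMap.star_eq_adjoint, eq_comm, ContinuousLinearMap.eq_adjoint_iff]
  exact hE.inner_apply j i

/-- The `*`-homomorphism from `N × N` matrices to `B(H)` that sends the standard matrix units to
`E i j`, for `i, j < N`. -/
noncomputable def unitHom {E : ℕ → ℕ → (H →L[ℂ] H)} (hE : IsMatrixUnits E) (N : ℕ) :
    Matrix (Fin N) (Fin N) ℂ →⋆ₙₐ[ℂ] (H →L[ℂ] H) where
  toFun c := ∑ i, ∑ j, c i j • E i j
  map_smul' r c := by
    simp [Finset.smul_sum, mul_smul]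
  map_zero' := by simp
  map_add' c d := by simp [add_smul, Finset.sum_add_distrib]
  map_mul' c d := by
    have h (i j : Fin N) : (c i j • E i j) * ∑ k, ∑ l, d k l • E k l =
        ∑ l, (c i j * d j l) • E i l := by
      rw [Finset.mul_sum, Finset.sum_eq_single j]
      · simp only [Finset.mul_sum, smul_mul_smul_comm, hE.mul, if_true]
      · intro k _ hk
        simp [Finset.mul_sum, hE.mul, Fin.val_inj, hk.symm]
      · simp
    simp only [Finset.sum_mul, h, Matrix.mul_apply, Finset.sum_smul]
    exact Finset.sum_congr rfl fun i _ => Finset.sum_comm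
  map_star' c := by
    simp only [star_sum, star_smul, hE.star, Matrix.star_apply]
    exact Finset.sum_comm

theorem unitHom_apply {E : ℕ → ℕ → (H →L[ℂ] H)} (hE : IsMatrixUnits E) (N : ℕ)
    (c : Matrix (Fin N) (Fin N) ℂ) : unitHom hE N c = ∑ i, ∑ j, c i j • E i j := rfl

/-- The algebra generated by matrix units is the increasing union of the ranges of `unitHom`. -/
theorem exists_unitHom_of_mem_adjoin {E : ℕ → ℕ → (H →L[ℂ] H)} (hE : IsMatrixUnits E)
    {T : H →L[ℂ] H}
    (hT : T ∈ NonUnitalStarAlgebra.adjoin ℂ {T : H →L[ℂ] H | ∃ i j, T = E i j}) :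
    ∃ N, ∀ M ≥ N, ∃ c, unitHom hE M c = T := by
  induction hT using NonUnitalStarAlgebra.adjoin_induction with
  | mem x hx =>
    obtain ⟨i, j, rfl⟩ := hx
    refine ⟨max i j + 1, fun M hM => ?_⟩
    have hi : i < M := by omega
    have hj : j < M := by omega
    refine ⟨Matrix.single ⟨i, hi⟩ ⟨j, hj⟩ 1, ?_⟩
    rw [unitHom_apply, Finset.sum_eq_single ⟨i, hi⟩, Finset.sum_eq_single ⟨j, hj⟩]
    · simp
    · intro b _ hb
      simp [hb.symm]
    · simp
    · intro b _ hb
      simp [hb.symm]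
    · simp
  | add x y _ _ hx hy =>
    obtain ⟨N, hN⟩ := hx
    obtain ⟨N', hN'⟩ := hy
    refine ⟨max N N', fun M hM => ?_⟩
    obtain ⟨c, hc⟩ := hN M (by omega)
    obtain ⟨d, hd⟩ := hN' M (by omega)
    exact ⟨c + d, by rw [map_add, hc, hd]⟩
  | zero => exact ⟨0, fun M _ => ⟨0, map_zero _⟩⟩
  | mul x y _ _ hx hy =>
    obtain ⟨N, hN⟩ := hx
    obtain ⟨N', hN'⟩ := hy
    refine ⟨max N N', fun M hM => ?_⟩
    obtain ⟨c, hc⟩ := hN M (by omega)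
    obtain ⟨d, hd⟩ := hN' M (by omega)
    exact ⟨c * d, by rw [map_mul, hc, hd]⟩
  | smul r x _ hx =>
    obtain ⟨N, hN⟩ := hx
    refine ⟨N, fun M hM => ?_⟩
    obtain ⟨c, hc⟩ := hN M hM
    exact ⟨r • c, by rw [map_smul, hc]⟩
  | star x _ hx =>
    obtain ⟨N, hN⟩ := hx
    refine ⟨N, fun M hM => ?_⟩
    obtain ⟨c, hc⟩ := hN M hM
    exact ⟨star c, by rw [map_star, hc]⟩

/-! ### The operators `e p i j` are matrix units -/

theorem e_zero_apply (ξ : HilbertBasis ℕ ℂ H) {e : ℕ → ℕ → ℕ → (H →L[ℂ] H)}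
    (h0 : ∀ i j k, e 0 i j (ξ k) = if k = j then ξ i else 0) (i j : ℕ) (v : H) :
    e 0 i j v = inner ℂ (ξ j) v • ξ i := by
  have h : e 0 i j = (innerSL ℂ (ξ j)).smulRight (ξ i) := by
    refine ContinuousLinearMap.ext_on (s := Set.range ξ) ?_ ?_
    · rw [dense_iff_closure_eq, ← Submodule.topologicalClosure_coe, ξ.dense_span]
      rfl
    · rintro _ ⟨k, rfl⟩
      rw [h0, ContinuousLinearMap.smulRight_apply, innerSL_apply_apply,
        orthonormal_iff_ite.1 ξ.orthonormal]
      simp [eq_comm]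
  rw [h]
  rfl

theorem isMatrixUnits_zero (ξ : HilbertBasis ℕ ℂ H) {e : ℕ → ℕ → ℕ → (H →L[ℂ] H)}
    (h0 : ∀ i j k, e 0 i j (ξ k) = if k = j then ξ i else 0) : IsMatrixUnits (e 0) where
  mul_apply i j k l v := by
    simp only [e_zero_apply ξ h0, inner_smul_right, orthonormal_iff_ite.1 ξ.orthonormal]
    split_ifs <;> simp
  inner_apply i j v w := by
    simp only [e_zero_apply ξ h0, inner_smul_right, inner_smul_left, inner_conj_symm]
    ring

theorem isMatrixUnits_succ {n : ℕ → ℕ → ℕ} (hmono : ∀ p, StrictMono (n p))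
    (hdisj : ∀ p q, p ≠ q → ∀ k m, n p k ≠ n q m)
    {E F : ℕ → ℕ → (H →L[ℂ] H)} (hE : IsMatrixUnits E)
    (hF : ∀ i j, ∀ v : H, Tendsto (fun M => ∑ m ∈ Finset.range M, E (n i m) (n j m) v)
      atTop (𝓝 (F i j v))) : IsMatrixUnits F where
  mul_apply i j k l v := by
    -- The series for `F k l` is cut down to at most one term by a single `E a (n j m)`.
    have key : ∀ a m, E a (n j m) (F k l v) = if j = k then E a (n l m) v else 0 := by
      intro a m
      have h1 := ((E a (n j m)).continuous.tendsto _).comp (hF k l v)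
      refine tendsto_nhds_unique h1 (tendsto_const_nhds.congr' ?_)
      filter_upwards [eventually_gt_atTop m] with M hM
      simp only [Function.comp_apply, map_sum, hE.mul_apply]
      split_ifs with hjk
      · subst hjk
        simp [(hmono j).injective.eq_iff, hM]
      · exact (Finset.sum_eq_zero fun m' _ => if_neg (hdisj j k hjk m m')).symm
    refine tendsto_nhds_unique (hF i j (F k l v)) ?_
    simp only [key]
    split_ifs
    · exact hF i l v
    · simp
  inner_apply i j v w := by
    have h1 := (hF i j v).inner (𝕜 := ℂ) (tendsto_const_nhds (x := w))
    have h2 := (tendsto_const_nhds (x := v)).inner (𝕜 := ℂ) (hF j i w)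
    refine tendsto_nhds_unique h1 (h2.congr fun M => ?_)
    simp only [sum_inner, inner_sum, hE.inner_apply]

theorem matrixUnits (ξ : HilbertBasis ℕ ℂ H)
    {n : ℕ → ℕ → ℕ} (hmono : ∀ p, StrictMono (n p))
    (hdisj : ∀ p q, p ≠ q → ∀ k m, n p k ≠ n q m)
    {e : ℕ → ℕ → ℕ → (H →L[ℂ] H)}
    (h0 : ∀ i j k, e 0 i j (ξ k) = if k = j then ξ i else 0)
    (hrec : ∀ p i j, ∀ v : H, Tendsto
      (fun M => ∑ m ∈ Finset.range M, e p (n i m) (n j m) v) atTop (𝓝 (e (p + 1) i j v)))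
    (p : ℕ) : IsMatrixUnits (e p) := by
  induction p with
  | zero => exact isMatrixUnits_zero ξ h0
  | succ p ih => exact isMatrixUnits_succ hmono hdisj ih (hrec p)

/-! ### Basis vectors along which `A_q` vanishes -/

/-- The index of the basis vector reached from `k` by always taking the first element of the
block: `stem n (q + 1) k = stem n q (n k 0)`. -/
def stem (n : ℕ → ℕ → ℕ) : ℕ → ℕ → ℕ
  | 0, k => k
  | q + 1, k => stem n q (n k 0)

theorem block_injective {n : ℕ → ℕ → ℕ} (hdisj : ∀ p q, p ≠ q → ∀ k m, n p k ≠ n q m) (m : ℕ) :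
    Function.Injective fun j => n j m := fun i j h => by
  by_contra hij
  exact hdisj i j hij m m h

theorem stem_injective {n : ℕ → ℕ → ℕ} (hdisj : ∀ p q, p ≠ q → ∀ k m, n p k ≠ n q m) (q : ℕ) :
    Function.Injective (stem n q) := by
  induction q with
  | zero => exact fun _ _ h => h
  | succ q ih => exact ih.comp (block_injective hdisj 0)

/-- One step of the recursion: if `E` acts as matrix units on vectors `u k`, then `F` acts as matrix
units on the `m`-th elements `u (n k m)` of the blocks, for every fixed `m`. -/
theorem block_apply {n : ℕ → ℕ → ℕ} (hmono : ∀ p, StrictMono (n p))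
    (hdisj : ∀ p q, p ≠ q → ∀ k m, n p k ≠ n q m)
    {E F : ℕ → ℕ → (H →L[ℂ] H)} {u : ℕ → H}
    (hE : ∀ i j k, E i j (u k) = if k = j then u i else 0)
    (hF : ∀ i j, ∀ v : H, Tendsto (fun M => ∑ m ∈ Finset.range M, E (n i m) (n j m) v)
      atTop (𝓝 (F i j v))) (m i j k : ℕ) :
    F i j (u (n k m)) = if k = j then u (n i m) else 0 := by
  refine tendsto_nhds_unique (hF i j _) (tendsto_const_nhds.congr' ?_)
  filter_upwards [eventually_gt_atTop m] with M hM
  simp only [hE]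
  split_ifs with hjk
  · subst hjk
    simp [(hmono k).injective.eq_iff, hM]
  · exact (Finset.sum_eq_zero fun m' _ => if_neg (hdisj k j hjk m m')).symm

theorem stem_apply (ξ : HilbertBasis ℕ ℂ H)
    {n : ℕ → ℕ → ℕ} (hmono : ∀ p, StrictMono (n p))
    (hdisj : ∀ p q, p ≠ q → ∀ k m, n p k ≠ n q m)
    {e : ℕ → ℕ → ℕ → (H →L[ℂ] H)}
    (h0 : ∀ i j k, e 0 i j (ξ k) = if k = j then ξ i else 0)
    (hrec : ∀ p i j, ∀ v : H, Tendsto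
      (fun M => ∑ m ∈ Finset.range M, e p (n i m) (n j m) v) atTop (𝓝 (e (p + 1) i j v)))
    (q i j k : ℕ) : e q i j (ξ (stem n q k)) = if k = j then ξ (stem n q i) else 0 := by
  induction q generalizing i j k with
  | zero => exact h0 i j k
  | succ q ih => exact block_apply (u := fun k => ξ (stem n q k)) hmono hdisj ih (hrec q) 0 i j k

/-- A compact operator maps an orthonormal basis to a null family: the basis is weakly null, so
the only possible limit point of its relatively compact image is `0`. -/
theorem compact_tendsto (ξ : HilbertBasis ℕ ℂ H) {T : H →L[ℂ] H} (hT : IsCompactOperator ⇑T) :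
    Tendsto (fun k => T (ξ k)) cofinite (𝓝 0) := by
  have hweak : ∀ w : H, Tendsto (fun k => inner ℂ (ξ k) w) cofinite (𝓝 0) := by
    intro w
    have h := (ξ.orthonormal.inner_products_summable (x := w)).tendsto_cofinite_zero
    rw [tendsto_zero_iff_norm_tendsto_zero]
    have h' := (Real.continuous_sqrt.tendsto _).comp h
    simpa [Function.comp_def, Real.sqrt_sq] using h'
  have hcomp := IsCompactOperator.isCompact_closure_image_closedBall (f := (T : H →ₗ[ℂ] H)) hT 1
  rw [tendsto_iff_ultrafilter]
  intro U hU
  obtain ⟨y, _, hy⟩ := hcomp.ultrafilter_le_nhds (U.map fun k => T (ξ k)) (by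
    rw [le_principal_iff]
    refine Filter.mem_map.2 (Filter.univ_mem' fun k => subset_closure ⟨ξ k, ?_, rfl⟩)
    simp [ξ.orthonormal.1 k])
  have hy' : Tendsto (fun k => T (ξ k)) U (𝓝 y) := hy
  have h1 := hy'.inner (𝕜 := ℂ) (tendsto_const_nhds (x := y))
  have h2 : Tendsto (fun k => inner ℂ (T (ξ k)) y) U (𝓝 0) := by
    simp only [← ContinuousLinearMap.adjoint_inner_right]
    exact (hweak _).mono_left hU
  have : y = 0 := inner_self_eq_zero.1 (tendsto_nhds_unique h1 h2)
  exact this ▸ hy'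

/-- Vanishing along a bounded family of vectors is a norm-closed condition on operators. -/
theorem closure_tendsto {u : ℕ → H} (hu : ∀ k, ‖u k‖ ≤ 1) {S : Set (H →L[ℂ] H)}
    (hS : ∀ T ∈ S, Tendsto (fun k => T (u k)) cofinite (𝓝 0)) {T : H →L[ℂ] H}
    (hT : T ∈ closure S) : Tendsto (fun k => T (u k)) cofinite (𝓝 0) := by
  rw [Metric.tendsto_nhds]
  intro ε hε
  obtain ⟨R, hR, hTR⟩ := Metric.mem_closure_iff.1 hT (ε / 2) (half_pos hε)
  filter_upwards [(Metric.tendsto_nhds.1 (hS R hR)) (ε / 2) (half_pos hε)] with k hk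
  rw [dist_zero_right] at hk ⊢
  rw [dist_eq_norm] at hTR
  have h1 : ‖(T - R) (u k)‖ ≤ ‖T - R‖ := (T - R).unit_le_opNorm _ (hu k)
  have h2 : T (u k) = (T - R) (u k) + R (u k) := by simp
  rw [h2]
  linarith [norm_add_le ((T - R) (u k)) (R (u k))]

theorem Kset_vanishes {e : ℕ → ℕ → ℕ → (H →L[ℂ] H)} {q : ℕ} (hE : IsMatrixUnits (e q))
    {u : ℕ → H} (hu : ∀ k, ‖u k‖ ≤ 1)
    (hact : ∀ i j k, e q i j (u k) = if k = j then u i else 0)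
    {T : H →L[ℂ] H} (hT : T ∈ Kset e q) : Tendsto (fun k => T (u k)) cofinite (𝓝 0) := by
  refine closure_tendsto hu (fun R hR => ?_) hT
  obtain ⟨N, hN⟩ := exists_unitHom_of_mem_adjoin hE hR
  obtain ⟨c, rfl⟩ := hN N le_rfl
  refine tendsto_const_nhds.congr' ?_
  have hfin : ∀ᶠ k in cofinite, N ≤ k := by
    rw [Nat.cofinite_eq_atTop]
    exact eventually_ge_atTop N
  filter_upwards [hfin] with k hk
  simp only [unitHom_apply, _root_.sum_apply, _root_.smul_apply, hact]
  refine (Finset.sum_eq_zero fun i _ => Finset.sum_eq_zero fun j _ => ?_).symm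
  rw [if_neg (by have := j.2; omega), smul_zero]

theorem Aset_vanishes (ξ : HilbertBasis ℕ ℂ H)
    {n : ℕ → ℕ → ℕ} (hmono : ∀ p, StrictMono (n p))
    (hdisj : ∀ p q, p ≠ q → ∀ k m, n p k ≠ n q m)
    {e : ℕ → ℕ → ℕ → (H →L[ℂ] H)}
    (h0 : ∀ i j k, e 0 i j (ξ k) = if k = j then ξ i else 0)
    (hrec : ∀ p i j, ∀ v : H, Tendsto
      (fun M => ∑ m ∈ Finset.range M, e p (n i m) (n j m) v) atTop (𝓝 (e (p + 1) i j v)))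
    (q : ℕ) {a : H →L[ℂ] H} (ha : a ∈ Aset e q) :
    Tendsto (fun k => a (ξ (stem n q k))) cofinite (𝓝 0) := by
  induction q generalizing a with
  | zero => exact compact_tendsto ξ ha
  | succ q ih =>
    obtain ⟨b, hb, c, hc, rfl⟩ := Set.mem_add.1 ha
    have h1 := (ih hb).comp (block_injective hdisj 0).tendsto_cofinite
    have h2 := Kset_vanishes (matrixUnits ξ hmono hdisj h0 hrec (q + 1))
      (fun k => (ξ.orthonormal.1 (stem n (q + 1) k)).le)
      (stem_apply ξ hmono hdisj h0 hrec (q + 1)) hc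
    simpa [stem] using h1.add h2

/-! ### The norm estimate -/

theorem norm_sum_smul {N : ℕ} {u : Fin N → H} (hu : Orthonormal ℂ u)
    (v : EuclideanSpace ℂ (Fin N)) : ‖∑ j, v j • u j‖ = ‖v‖ := by
  rw [← sq_eq_sq₀ (norm_nonneg _) (norm_nonneg _), EuclideanSpace.norm_sq_eq]
  have h := hu.inner_sum v v Finset.univ
  rw [inner_self_eq_norm_sq_to_K] at h
  apply Complex.ofReal_injective
  push_cast
  refine h.trans (Finset.sum_congr rfl fun i _ => ?_)
  rw [Complex.conj_mul']

/-- The norm of a matrix is not decreased by adding an operator `a` that vanishes asymptotically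
along a sequence of copies `u m` of the standard basis. -/
theorem norm_unitHom_le {E : ℕ → ℕ → (H →L[ℂ] H)} (hE : IsMatrixUnits E) {u : ℕ → ℕ → H}
    (hu : ∀ m, Orthonormal ℂ (u m))
    (hact : ∀ m i j k, E i j (u m k) = if k = j then u m i else 0)
    {a : H →L[ℂ] H} (ha : ∀ j, Tendsto (fun m => a (u m j)) atTop (𝓝 0))
    {N : ℕ} (c : Matrix (Fin N) (Fin N) ℂ) :
    ‖unitHom hE N c‖ ≤ ‖unitHom hE N c + a‖ := by
  refine (NonUnitalStarAlgHom.norm_apply_le (unitHom hE N) c).trans ?_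
  rw [Matrix.cstar_norm_def]
  refine ContinuousLinearMap.opNorm_le_bound _ (norm_nonneg _) fun v => ?_
  set x := unitHom hE N c with hx
  set w := Matrix.toEuclideanCLM (n := Fin N) (𝕜 := ℂ) c v with hw
  have hu' : ∀ m, Orthonormal ℂ fun j : Fin N => u m j := fun m =>
    (hu m).comp _ Fin.val_injective
  have hxv : ∀ m, x (∑ j : Fin N, v j • u m j) = ∑ i : Fin N, w i • u m i := by
    intro m
    have hwi : ∀ i, w i = ∑ j, c i j * v j := fun i => by
      rw [hw, Matrix.ofLp_toEuclideanCLM]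
      rfl
    simp only [hx, unitHom_apply, _root_.sum_apply, _root_.smul_apply, hwi, Finset.sum_smul]
    refine Finset.sum_congr rfl fun i _ => Finset.sum_congr rfl fun j _ => ?_
    rw [map_sum, Finset.sum_eq_single j]
    · simp [hact, mul_smul]
    · intro b _ hb
      simp [hact, Fin.val_inj, hb]
    · simp
  have hbound : ∀ m, ‖w‖ ≤ ‖x + a‖ * ‖v‖ + ‖a (∑ j : Fin N, v j • u m j)‖ := by
    intro m
    have h1 := (x + a).le_opNorm (∑ j : Fin N, v j • u m j)
    rw [norm_sum_smul (hu' m)] at h1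
    rw [← norm_sum_smul (hu' m) w, ← hxv m]
    have h2 : x (∑ j : Fin N, v j • u m j) =
        (x + a) (∑ j : Fin N, v j • u m j) - a (∑ j : Fin N, v j • u m j) := by
      rw [_root_.add_apply, add_sub_cancel_right]
    rw [h2]
    exact (norm_sub_le _ _).trans (by gcongr)
  have hlim : Tendsto (fun m => a (∑ j : Fin N, v j • u m j)) atTop (𝓝 0) := by
    simp only [map_sum, map_smul]
    have := tendsto_finsetSum (Finset.univ : Finset (Fin N))
      fun j _ => (ha j).const_smul (v j)
    simpa using this
  have := (hlim.norm.const_add (‖x + a‖ * ‖v‖))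
  rw [norm_zero, add_zero] at this
  exact ge_of_tendsto' this hbound

/-- The norm estimate for `x ∈ K_{q+1}`, with `a ∈ A_q` replaced by the only property of `a` that
is used. -/
theorem norm_le_norm_add (ξ : HilbertBasis ℕ ℂ H)
    {n : ℕ → ℕ → ℕ} (hmono : ∀ p, StrictMono (n p))
    (hdisj : ∀ p q, p ≠ q → ∀ k m, n p k ≠ n q m)
    {e : ℕ → ℕ → ℕ → (H →L[ℂ] H)}
    (h0 : ∀ i j k, e 0 i j (ξ k) = if k = j then ξ i else 0)
    (hrec : ∀ p i j, ∀ v : H, Tendsto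
      (fun M => ∑ m ∈ Finset.range M, e p (n i m) (n j m) v) atTop (𝓝 (e (p + 1) i j v)))
    (q : ℕ) {x a : H →L[ℂ] H} (hx : x ∈ Kset e (q + 1))
    (ha : Tendsto (fun k => a (ξ (stem n q k))) cofinite (𝓝 0)) : ‖x‖ ≤ ‖x + a‖ := by
  have hE := matrixUnits ξ hmono hdisj h0 hrec (q + 1)
  have hclosed : IsClosed {x : H →L[ℂ] H | ‖x‖ ≤ ‖x + a‖} :=
    isClosed_le continuous_norm (continuous_id.add continuous_const).norm
  refine closure_minimal (fun y hy => ?_) hclosed hx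
  obtain ⟨N, hN⟩ := exists_unitHom_of_mem_adjoin hE hy
  obtain ⟨c, rfl⟩ := hN N le_rfl
  refine norm_unitHom_le hE (u := fun m j => ξ (stem n q (n j m))) (fun m => ?_) ?_ ?_ c
  · exact ξ.orthonormal.comp _ ((stem_injective hdisj q).comp (block_injective hdisj m))
  · intro m i j k
    exact block_apply (u := fun k => ξ (stem n q k)) hmono hdisj
      (stem_apply ξ hmono hdisj h0 hrec q) (hrec q) m i j k
  · intro j
    rw [← Nat.cofinite_eq_atTop]
    exact ha.comp (hmono j).injective.tendsto_cofinite

end helpers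

/-- for every `l ≥ 1`, `A_{l-1} ∩ K_l = {0}` and the quotient map
`A_l → A_l/A_{l-1}` is isometric on `K_l`, i.e. `‖x + a‖ ≥ ‖x‖` for `x ∈ K_l`,
`a ∈ A_{l-1}`. -/
theorem Alm1_inter_Kl_trivial_and_quotient_isometric
    {H : Type*} [NormedAddCommGroup H] [InnerProductSpace ℂ H] [CompleteSpace H]
    (ξ : HilbertBasis ℕ ℂ H)
    (n : ℕ → ℕ → ℕ) (hmono : ∀ p, StrictMono (n p))
    (hdisj : ∀ p q, p ≠ q → ∀ k m, n p k ≠ n q m)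
    (hcover : ∀ k, ∃ p m, n p m = k)
    (e : ℕ → ℕ → ℕ → (H →L[ℂ] H))
    (h0 : ∀ i j k, e 0 i j (ξ k) = if k = j then ξ i else 0)
    (hrec : ∀ p i j, ∀ v : H, Filter.Tendsto
      (fun M => ∑ m ∈ Finset.range M, e p (n i m) (n j m) v)
      Filter.atTop (nhds (e (p + 1) i j v)))
    :
    ∀ l : ℕ, 1 ≤ l →
      (∀ x ∈ Kset e l, x ∈ Aset e (l - 1) → x = 0) ∧
      (∀ x ∈ Kset e l, ∀ a ∈ Aset e (l - 1), ‖x + a‖ ≥ ‖x‖) := by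
  intro l hl
  obtain ⟨q, rfl⟩ : ∃ q, l = q + 1 := ⟨l - 1, by omega⟩
  rw [Nat.add_sub_cancel]
  refine ⟨fun x hx hxA => ?_, fun x hx a ha => ?_⟩
  · have h : Tendsto (fun k => (-x) (ξ (stem n q k))) cofinite (nhds 0) := by
      simpa using (Aset_vanishes ξ hmono hdisj h0 hrec q hxA).neg
    simpa using norm_le_norm_add ξ hmono hdisj h0 hrec q hx h
  · exact norm_le_norm_add ξ hmono hdisj h0 hrec q hx (Aset_vanishes ξ hmono hdisj h0 hrec q ha)
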